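/- arXiv:1803.03913 — 3 statements merged into one kernel-verified Lean document; each statement's English description precedes it below -/
import Mathlib

section
/- Let 𝓗 be a set of (finite, nonempty) connected simple graphs. Then there exists a constant c = c(𝓗) such that every connected 𝓗-free graph G satisfies γ(G) ≤ c if and only if there exist positive integers k, ℓ and m such that 𝓗 ≤ {K*_k, S*_ℓ, P_m}. -/
/-!
For the forward direction, `K*_n`, `S*_n` and `P_{3n-2}` are connected and each contains `n`
vertices with pairwise disjoint closed neighborhoods (`lt_domNum_of_packing`), so their domination
numbers are unbounded; if the domination number of connected `𝓗`-free graphs is bounded, large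
members of the three families contain a member of `𝓗`.

For the converse, a connected graph without induced `K*_k`, `S*_l`, `P_m` is considered. A geodesic
is an induced path, so only boundedly many distance layers from a fixed vertex `a` are nonempty, and
it suffices to dominate each layer by boundedly many vertices.

* `exists_bound_indep`: an independent set in a layer is dominated by boundedly many vertices of the
  previous layer. In a minimal such dominating set every vertex has a private neighbor. A large
  clique in it gives `K*_k`; a large independent set has, by induction on the layer, many members
  with a common neighbor one layer below, which gives `S*_l`. Ramsey's theorem yields the bound.
* `exists_bound_layer`: a maximal independent set `Y` of the layer is dominated by a bounded set `U`.
  For `u ∈ U`, the vertices outside `N[u]` with a neighbor in `Y ∩ N(u)` are dominated by a minimal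
  `W ⊆ Y ∩ N(u)`. Now Ramsey's theorem is applied to the private neighbors of `W`
  (`card_lt_of_private`): a clique among them has the corresponding vertices of `W` as pendants, and
  an independent set among them gives a subdivided star centered at `u`, so `W` is bounded.
-/


open SimpleGraph Finset

/-- A set `U` dominates a set `Y` in the graph `G`:
every vertex of `Y` is in the closed neighborhood of some vertex of `U`. -/
def Dominates {V : Type} (G : SimpleGraph V) (U Y : Set V) : Prop :=
  ∀ y ∈ Y, ∃ u ∈ U, u = y ∨ G.Adj u y

/-- The domination number of a finite graph. -/
noncomputable def domNum {V : Type} [Fintype V] (G : SimpleGraph V) : ℕ :=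
  sInf {n | ∃ S : Set V, S.ncard = n ∧ Dominates G S Set.univ}

/-- The graph `K*_n`: a complete graph on `x₁,…,xₙ` (the `inl` vertices)
together with a pendant vertex `yᵢ` (the `inr` vertices) attached to each `xᵢ`. -/
def Kstar (n : ℕ) : SimpleGraph (Fin n ⊕ Fin n) :=
  SimpleGraph.fromRel (fun a b => match a, b with
    | Sum.inl _, Sum.inl _ => True
    | Sum.inl i, Sum.inr j => i = j
    | _, _ => False)

/-- The graph `S*_n`: a star with center `x` (= `none`), leaves `yᵢ` (= `some (inl i)`),
with every edge subdivided by `zᵢ` (= `some (inr i)`): edges `x yᵢ` and `yᵢ zᵢ`. -/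
def Sstar (n : ℕ) : SimpleGraph (Option (Fin n ⊕ Fin n)) :=
  SimpleGraph.fromRel (fun a b => match a, b with
    | none, some (Sum.inl _) => True
    | some (Sum.inl i), some (Sum.inr j) => i = j
    | _, _ => False)

/-- `N^i_G(a)`: the set of vertices at distance exactly `i` from `a` in `G`. -/
def sphere {V : Type} (G : SimpleGraph V) (a : V) (i : ℕ) : Set V :=
  {v | G.Reachable a v ∧ G.dist a v = i}

/-- An independent set of vertices. -/
def Indep {V : Type} (G : SimpleGraph V) (X : Set V) : Prop :=
  ∀ x ∈ X, ∀ y ∈ X, x ≠ y → ¬ G.Adj x y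

/-- `N` vertices suffice to force a clique of size `s` or an independent set of size `t`. -/
def RamseyProp (N s t : ℕ) : Prop :=
  ∀ G : SimpleGraph (Fin N),
    (∃ A : Finset (Fin N), G.IsNClique s A) ∨ (∃ B : Finset (Fin N), Gᶜ.IsNClique t B)

/-- The Ramsey number `R(s,t)`. -/
noncomputable def ramsey (s t : ℕ) : ℕ := sInf {N | RamseyProp N s t}

/-- The function `g_{k,ℓ}` with `g(1) = 1` and `g(i) = R(k, (ℓ-1)g(i-1)+1) - 1` for `i ≥ 2`. -/
noncomputable def gfun (k l : ℕ) : ℕ → ℕ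
  | 0 => 1
  | 1 => 1
  | (i + 2) => ramsey k ((l - 1) * gfun k l (i + 1) + 1) - 1

/-- The function `f_{k,ℓ}(i) = R(k,ℓ) ⬝ g_{k,ℓ}(i)`. -/
noncomputable def ffun (k l i : ℕ) : ℕ := ramsey k l * gfun k l i

/-- A finite graph, encoded with vertex set `Fin n`. -/
abbrev FinGraph := Σ n : ℕ, SimpleGraph (Fin n)

/-- `G` is `𝓗`-free: no member of `𝓗` is an induced subgraph of `G`. -/
def HFree (𝓗 : Set FinGraph) {V : Type} (G : SimpleGraph V) : Prop :=
  ∀ H ∈ 𝓗, IsEmpty (H.2 ↪g G)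

/-! ### Adjacency in the model graphs -/

section Models

variable {n : ℕ}

lemma Kstar_adj_inl_inl (i j : Fin n) :
    (Kstar n).Adj (Sum.inl i) (Sum.inl j) ↔ i ≠ j := by
  simp [Kstar]

lemma Kstar_adj_inl_inr (i j : Fin n) : (Kstar n).Adj (Sum.inl i) (Sum.inr j) ↔ i = j := by
  simp [Kstar]

lemma Kstar_adj_inr_inl (i j : Fin n) : (Kstar n).Adj (Sum.inr i) (Sum.inl j) ↔ j = i := by
  simp [Kstar]

lemma Kstar_adj_inr_inr (i j : Fin n) : ¬ (Kstar n).Adj (Sum.inr i) (Sum.inr j) := by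
  simp [Kstar]

lemma Sstar_adj_none_inl (i : Fin n) : (Sstar n).Adj none (some (Sum.inl i)) := by
  simp [Sstar]

lemma Sstar_adj_none_inr (i : Fin n) : ¬ (Sstar n).Adj none (some (Sum.inr i)) := by
  simp [Sstar]

lemma Sstar_adj_inl_inl (i j : Fin n) :
    ¬ (Sstar n).Adj (some (Sum.inl i)) (some (Sum.inl j)) := by
  simp [Sstar]

lemma Sstar_adj_inl_inr (i j : Fin n) :
    (Sstar n).Adj (some (Sum.inl i)) (some (Sum.inr j)) ↔ i = j := by
  simp [Sstar]

lemma Sstar_adj_inr_inr (i j : Fin n) :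
    ¬ (Sstar n).Adj (some (Sum.inr i)) (some (Sum.inr j)) := by
  simp [Sstar]

lemma Kstar_connected (hn : 0 < n) : (Kstar n).Connected := by
  have hc : ∀ i : Fin n, (Kstar n).Reachable (Sum.inl i) (Sum.inl ⟨0, hn⟩) := by
    intro i
    by_cases h : i = ⟨0, hn⟩
    · rw [h]
    · exact ((Kstar_adj_inl_inl _ _).2 h).reachable
  rw [connected_iff_exists_forall_reachable]
  refine ⟨Sum.inl ⟨0, hn⟩, ?_⟩
  rintro (i | i)
  · exact (hc i).symm
  · exact (hc i).symm.trans ((Kstar_adj_inl_inr i i).2 rfl).reachable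

lemma Sstar_connected : (Sstar n).Connected := by
  rw [connected_iff_exists_forall_reachable]
  refine ⟨none, ?_⟩
  rintro (_ | i | i)
  · rfl
  · exact (Sstar_adj_none_inl i).reachable
  · exact (Sstar_adj_none_inl i).reachable.trans ((Sstar_adj_inl_inr i i).2 rfl).reachable

end Models

/-! ### Large domination number of the model graphs -/

/-- A 2-packing (vertices with pairwise disjoint closed neighborhoods) of size exceeding `c`
forces the domination number to exceed `c`. -/
lemma lt_domNum_of_packing {V : Type} [Fintype V] (G : SimpleGraph V) (c : ℕ)
    (p : Fin (c + 1) → V)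
    (hp : ∀ i j u, (u = p i ∨ G.Adj u (p i)) → (u = p j ∨ G.Adj u (p j)) → i = j) :
    c < domNum G := by
  have hne : {n | ∃ S : Set V, S.ncard = n ∧ Dominates G S Set.univ}.Nonempty :=
    ⟨_, Set.univ, rfl, fun y _ => ⟨y, trivial, Or.inl rfl⟩⟩
  obtain ⟨S, hS, hdom⟩ := Nat.sInf_mem hne
  have hdom' : ∀ i, ∃ u ∈ S, u = p i ∨ G.Adj u (p i) := fun i => hdom (p i) trivial
  choose f hfS hf using hdom'
  have hinj : Function.Injective f := fun i j hij => hp i j (f i) (hf i) (hij ▸ hf j)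
  have h1 : (Set.range f).ncard = c + 1 := by
    rw [← Set.image_univ, Set.ncard_image_of_injective _ hinj, Set.ncard_univ]
    simp
  have h2 : (Set.range f).ncard ≤ S.ncard :=
    Set.ncard_le_ncard (by rintro _ ⟨i, rfl⟩; exact hfS i) (Set.toFinite S)
  unfold domNum
  omega

lemma lt_domNum_Kstar (c : ℕ) : c < domNum (Kstar (c + 1)) := by
  refine lt_domNum_of_packing _ c (fun i => Sum.inr i) ?_
  rintro i j (u | u) hi hj
  · simp only [reduceCtorEq, false_or, Kstar_adj_inl_inr] at hi hj
    rw [← hi, ← hj]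
  · simp only [Sum.inr.injEq, Kstar_adj_inr_inr, or_false] at hi hj
    rw [← hi, ← hj]

lemma lt_domNum_Sstar (c : ℕ) : c < domNum (Sstar (c + 1)) := by
  refine lt_domNum_of_packing _ c (fun i => some (Sum.inr i)) ?_
  rintro i j (_ | u | u) hi hj
  · simp [Sstar_adj_none_inr] at hi
  · simp only [Option.some.injEq, reduceCtorEq, false_or, Sstar_adj_inl_inr] at hi hj
    rw [← hi, ← hj]
  · simp only [Option.some.injEq, Sum.inr.injEq, Sstar_adj_inr_inr, or_false] at hi hj
    rw [← hi, ← hj]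

lemma lt_domNum_pathGraph (c : ℕ) : c < domNum (pathGraph (3 * c + 1)) := by
  refine lt_domNum_of_packing _ c (fun i => ⟨3 * i, by omega⟩) ?_
  intro i j u hi hj
  simp only [pathGraph_adj, Fin.ext_iff] at hi hj ⊢
  omega

/-! ### Ramsey's theorem and minimal dominating subsets -/

lemma isIndepSet_insert_iff {V : Type} {G : SimpleGraph V} {s : Set V} {a : V} :
    G.IsIndepSet (insert a s) ↔ G.IsIndepSet s ∧ ∀ b ∈ s, a ≠ b → ¬ G.Adj a b := by
  simp [IsIndepSet, Set.pairwise_insert, G.adj_comm _ a]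

/-- Ramsey's theorem for graphs, in the form of a threshold valid for finite vertex subsets of an
arbitrary graph. -/
lemma exists_ramsey (s t : ℕ) : ∃ N : ℕ, ∀ (V : Type) (G : SimpleGraph V) (S : Finset V),
    N ≤ #S → (∃ A ⊆ S, #A = s ∧ G.IsClique A) ∨ (∃ B ⊆ S, #B = t ∧ G.IsIndepSet B) := by
  classical
  induction s generalizing t with
  | zero => exact ⟨0, fun V G S _ => Or.inl ⟨∅, by simp⟩⟩
  | succ s ihs =>
    induction t with
    | zero => exact ⟨0, fun V G S _ => Or.inr ⟨∅, by simp⟩⟩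
    | succ t iht =>
      obtain ⟨N₁, h₁⟩ := ihs (t + 1)
      obtain ⟨N₂, h₂⟩ := iht
      refine ⟨N₁ + N₂ + 1, fun V G S hS => ?_⟩
      obtain ⟨v, hv⟩ : S.Nonempty := by
        rw [← Finset.card_pos]; omega
      have hcard : #((S.erase v).filter (fun w => G.Adj v w)) +
          #((S.erase v).filter (fun w => ¬ G.Adj v w)) = #S - 1 := by
        rw [Finset.card_filter_add_card_filter_not, Finset.card_erase_of_mem hv]
      have hsub₁ : (S.erase v).filter (fun w => G.Adj v w) ⊆ S :=
        (Finset.filter_subset _ _).trans (Finset.erase_subset _ _)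
      have hsub₂ : (S.erase v).filter (fun w => ¬ G.Adj v w) ⊆ S :=
        (Finset.filter_subset _ _).trans (Finset.erase_subset _ _)
      rcases (by omega : N₁ ≤ #((S.erase v).filter (fun w => G.Adj v w)) ∨
          N₂ ≤ #((S.erase v).filter (fun w => ¬ G.Adj v w))) with h | h
      · rcases h₁ V G _ h with ⟨A, hA, hc, hcl⟩ | ⟨B, hB, hc, hi⟩
        · refine Or.inl ⟨insert v A, Finset.insert_subset hv (hA.trans hsub₁), ?_, ?_⟩
          · rw [Finset.card_insert_of_notMem, hc]
            intro hvA
            simpa using hA hvA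
          · rw [Finset.coe_insert, isClique_insert]
            refine ⟨hcl, fun b hb _ => ?_⟩
            exact (Finset.mem_filter.1 (hA hb)).2
        · exact Or.inr ⟨B, hB.trans hsub₁, hc, hi⟩
      · rcases h₂ V G _ h with ⟨A, hA, hc, hcl⟩ | ⟨B, hB, hc, hi⟩
        · exact Or.inl ⟨A, hA.trans hsub₂, hc, hcl⟩
        · refine Or.inr ⟨insert v B, Finset.insert_subset hv (hB.trans hsub₂), ?_, ?_⟩
          · rw [Finset.card_insert_of_notMem, hc]
            intro hvB
            simpa using hB hvB
          · rw [Finset.coe_insert, isIndepSet_insert_iff]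
            refine ⟨hi, fun b hb _ => ?_⟩
            exact (Finset.mem_filter.1 (hB hb)).2

/-- An inclusion-minimal subset of `U` dominating `X`: each of its members has a private
neighbor in `X`. -/
lemma exists_minimal_dominating {V : Type} (G : SimpleGraph V) (U X : Finset V)
    (h : ∀ x ∈ X, ∃ u ∈ U, G.Adj u x) :
    ∃ W ⊆ U, (∀ x ∈ X, ∃ w ∈ W, G.Adj w x) ∧
      ∃ p : V → V, ∀ w ∈ W, p w ∈ X ∧ G.Adj w (p w) ∧
        ∀ w' ∈ W, G.Adj w' (p w) → w' = w := by
  classical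
  let P : Finset V → Prop := fun W => ∀ x ∈ X, ∃ w ∈ W, G.Adj w x
  obtain ⟨W, hW, hmin⟩ := Finset.exists_min_image (U.powerset.filter P) (fun W => #W)
    ⟨U, Finset.mem_filter.2 ⟨Finset.mem_powerset_self U, h⟩⟩
  rw [Finset.mem_filter, Finset.mem_powerset] at hW
  refine ⟨W, hW.1, hW.2, ?_⟩
  have key : ∀ w, ∃ x, w ∈ W → x ∈ X ∧ G.Adj w x ∧ ∀ w' ∈ W, G.Adj w' x → w' = w := by
    intro w
    by_cases hw : w ∈ W
    · by_contra hcon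
      push Not at hcon
      -- without a private neighbor, `w` could be deleted
      have := hmin (W.erase w) (by
        rw [Finset.mem_filter, Finset.mem_powerset]
        refine ⟨(Finset.erase_subset _ _).trans hW.1, fun x hx => ?_⟩
        obtain ⟨u, hu, hux⟩ := hW.2 x hx
        by_cases huw : u = w
        · obtain ⟨w', hw', hadj, hne⟩ := (hcon x).2 hx (huw ▸ hux)
          exact ⟨w', Finset.mem_erase.2 ⟨hne, hw'⟩, hadj⟩
        · exact ⟨u, Finset.mem_erase.2 ⟨huw, hu⟩, hux⟩)
      rw [Finset.card_erase_of_mem hw] at this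
      have := Finset.card_pos.2 ⟨w, hw⟩
      omega
    · exact ⟨w, fun h => absurd h hw⟩
  choose p hp using key
  exact ⟨p, hp⟩

lemma exists_maximal_indep {V : Type} (G : SimpleGraph V) (L : Finset V) :
    ∃ Y ⊆ L, G.IsIndepSet Y ∧ ∀ x ∈ L, x ∉ Y → ∃ y ∈ Y, G.Adj y x := by
  classical
  obtain ⟨Y, hY, hmax⟩ := Finset.exists_max_image
    (L.powerset.filter (fun Y : Finset V => G.IsIndepSet (Y : Set V))) (fun Y => #Y)
    ⟨∅, by simp⟩
  rw [Finset.mem_filter, Finset.mem_powerset] at hY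
  refine ⟨Y, hY.1, hY.2, fun x hx hxY => ?_⟩
  by_contra hcon
  push Not at hcon
  have := hmax (insert x Y) (by
    rw [Finset.mem_filter, Finset.mem_powerset]
    refine ⟨Finset.insert_subset hx hY.1, ?_⟩
    rw [Finset.coe_insert, isIndepSet_insert_iff]
    exact ⟨hY.2, fun b hb _ hadj => hcon b hb hadj.symm⟩)
  rw [Finset.card_insert_of_notMem hxY] at this
  omega

lemma exists_enum {V : Type} {A : Finset V} {n : ℕ} (h : n ≤ #A) :
    ∃ f : Fin n → V, Function.Injective f ∧ ∀ i, f i ∈ A :=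
  ⟨fun i => A.equivFin.symm (Fin.castLE h i),
    fun i j hij => by simpa [Subtype.ext_iff.symm, Fin.ext_iff] using hij,
    fun i => (A.equivFin.symm (Fin.castLE h i)).2⟩

/-! ### Recognizing induced copies of the model graphs -/

lemma Kstar_embeds {V : Type} {G : SimpleGraph V} {n : ℕ} (x y : Fin n → V)
    (hx : ∀ i j, i ≠ j → G.Adj (x i) (x j)) (hy : ∀ i j, ¬ G.Adj (y i) (y j))
    (hxy : ∀ i j, G.Adj (x i) (y j) ↔ i = j) (hne : ∀ i j, x i ≠ y j) :
    Nonempty (Kstar n ↪g G) := by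
  have hinj : Function.Injective (Sum.elim x y) := by
    rintro (i | i) (j | j) h
    · by_contra hij
      have := hx i j (fun e => hij (e ▸ rfl))
      simp only [Sum.elim_inl] at h
      exact G.loopless.irrefl _ (h ▸ this)
    · exact absurd h (hne i j)
    · exact absurd h.symm (hne j i)
    · simp only [Sum.elim_inr] at h
      have := (hxy i j).1 (h ▸ (hxy i i).2 rfl)
      rw [this]
  refine ⟨⟨⟨Sum.elim x y, hinj⟩, fun {u v} => ?_⟩⟩
  change G.Adj (Sum.elim x y u) (Sum.elim x y v) ↔ (Kstar n).Adj u v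
  rcases u with i | i <;> rcases v with j | j
  · simp only [Sum.elim_inl, Kstar_adj_inl_inl]
    exact ⟨fun h e => G.loopless.irrefl _ (e ▸ h), hx i j⟩
  · simp [Kstar_adj_inl_inr, hxy]
  · simp [Kstar_adj_inr_inl, G.adj_comm (y i), hxy]
  · simp [Kstar_adj_inr_inr, hy]

lemma Sstar_embeds {V : Type} {G : SimpleGraph V} {n : ℕ} (c : V) (y z : Fin n → V)
    (hcy : ∀ i, G.Adj c (y i)) (hcz : ∀ i, ¬ G.Adj c (z i)) (hne : ∀ i, z i ≠ c)
    (hy : ∀ i j, ¬ G.Adj (y i) (y j)) (hz : ∀ i j, ¬ G.Adj (z i) (z j))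
    (hyz : ∀ i j, G.Adj (y i) (z j) ↔ i = j) :
    Nonempty (Sstar n ↪g G) := by
  have hyne : ∀ i j, y i ≠ z j := fun i j e => hcz j (e ▸ hcy i)
  have hinj : Function.Injective fun v : Option (Fin n ⊕ Fin n) => v.elim c (Sum.elim y z) := by
    rintro (_ | i | i) (_ | j | j) h
    · rfl
    · exact absurd h (hcy j).ne
    · exact absurd h.symm (hne j)
    · exact absurd h.symm (hcy i).ne
    · have h' : y i = y j := h
      have := (hyz j i).1 (h' ▸ (hyz i i).2 rfl)
      rw [this]
    · exact absurd h (hyne i j)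
    · exact absurd h (hne i)
    · exact absurd h.symm (hyne j i)
    · have h' : z i = z j := h
      have := (hyz i j).1 (h' ▸ (hyz i i).2 rfl)
      rw [this]
  refine ⟨⟨⟨_, hinj⟩, fun {u v} => ?_⟩⟩
  change G.Adj (u.elim c (Sum.elim y z)) (v.elim c (Sum.elim y z)) ↔ (Sstar n).Adj u v
  rcases u with _ | i | i <;> rcases v with _ | j | j
  · simp
  · simp [hcy, Sstar_adj_none_inl]
  · simp [hcz, Sstar_adj_none_inr]
  · simp [G.adj_comm (y i) c, (Sstar n).adj_comm (some _) none, hcy, Sstar_adj_none_inl]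
  · simp [hy, Sstar_adj_inl_inl]
  · simp [hyz, Sstar_adj_inl_inr]
  · simp [G.adj_comm (z i) c, (Sstar n).adj_comm (some _) none, hcz, Sstar_adj_none_inr]
  · simp [G.adj_comm (z i), (Sstar n).adj_comm (some (Sum.inr i)), hyz, Sstar_adj_inl_inr]
  · simp [hz, Sstar_adj_inr_inr]

/-- A geodesic is an induced path, so in a connected graph without induced `P_m` every distance
is less than `m`. -/
lemma dist_lt_of_pathFree {V : Type} {G : SimpleGraph V} (hG : G.Connected) {m : ℕ}
    (hP : IsEmpty (pathGraph m ↪g G)) (a v : V) : G.dist a v < m := by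
  by_contra hcon
  push Not at hcon
  obtain ⟨p, hp⟩ := hG.exists_walk_length_eq_dist a v
  have hd : ∀ i, i ≤ p.length → G.dist a (p.getVert i) = i := by
    intro i hi
    have h1 : G.dist a (p.getVert i) ≤ i := (dist_le (p.take i)).trans (by simp)
    have h2 : G.dist (p.getVert i) v ≤ p.length - i := (dist_le (p.drop i)).trans (by simp)
    have h3 := hG.dist_triangle (u := a) (v := p.getVert i) (w := v)
    omega
  have hd' : ∀ i : Fin m, G.dist a (p.getVert i) = i := fun i => hd i (by omega)
  have hinj : Function.Injective fun i : Fin m => p.getVert i := by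
    intro i j hij
    have hij' : p.getVert i = p.getVert j := hij
    have hi := hd' i
    rw [hij', hd' j] at hi
    exact Fin.ext hi.symm
  refine hP.false ⟨⟨_, hinj⟩, fun {i j} => ?_⟩
  · change G.Adj (p.getVert i) (p.getVert j) ↔ _
    rw [pathGraph_adj]
    constructor
    · intro hadj
      have hne : (i : ℕ) ≠ j := fun e => hadj.ne (by rw [e])
      have h1 := hG.dist_triangle (u := a) (v := p.getVert i) (w := p.getVert j)
      have h2 := hG.dist_triangle (u := a) (v := p.getVert j) (w := p.getVert i)
      rw [dist_eq_one_iff_adj.2 hadj] at h1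
      rw [dist_eq_one_iff_adj.2 hadj.symm] at h2
      rw [hd' i, hd' j] at h1 h2
      omega
    · rintro (h | h)
      · rw [← h]; exact p.adj_getVert_succ (by omega)
      · rw [← h]; exact (p.adj_getVert_succ (by omega)).symm

lemma exists_adj_of_dist_eq_succ {V : Type} {G : SimpleGraph V} (hG : G.Connected) {a v : V}
    {i : ℕ} (h : G.dist a v = i + 1) : ∃ u, G.dist a u = i ∧ G.Adj u v := by
  obtain ⟨p, hp⟩ := hG.exists_walk_length_eq_dist a v
  have hadj : G.Adj (p.getVert i) v := by
    have := p.adj_getVert_succ (i := i) (by omega)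
    rwa [show i + 1 = p.length by omega, p.getVert_length] at this
  refine ⟨p.getVert i, ?_, hadj⟩
  have h1 : G.dist a (p.getVert i) ≤ i := (dist_le (p.take i)).trans (by simp)
  have h3 := hG.dist_triangle (u := a) (v := p.getVert i) (w := v)
  rw [dist_eq_one_iff_adj.2 hadj] at h3
  omega

/-! ### Dominating the distance layers -/

/-- Every independent subset of the `(i+1)`-st distance layer is dominated by boundedly many
vertices of the `i`-th layer. A minimal such dominating set `U` has private neighbors forming an
independent set, so it contains no clique of size `k`; if it were large, it would contain a large
independent set, many of whose members share a neighbor one layer below by induction, and that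
neighbor is the center of an induced `S*_l`. -/
lemma exists_bound_indep (k l i : ℕ) : ∃ b : ℕ, ∀ (V : Type) [Fintype V] (G : SimpleGraph V),
    G.Connected → IsEmpty (Kstar k ↪g G) → IsEmpty (Sstar l ↪g G) → ∀ (a : V) (Y : Finset V),
    (∀ y ∈ Y, G.dist a y = i + 1) → G.IsIndepSet Y →
    ∃ U : Finset V, #U ≤ b ∧ (∀ u ∈ U, G.dist a u = i) ∧ ∀ y ∈ Y, ∃ u ∈ U, G.Adj u y := by
  classical
  induction i with
  | zero =>
    refine ⟨1, fun V _ G hG hK hS a Y hY hind => ⟨{a}, by simp, by simp, fun y hy => ?_⟩⟩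
    exact ⟨a, by simp, dist_eq_one_iff_adj.1 (hY y hy)⟩
  | succ i ih =>
    obtain ⟨b, hb⟩ := ih
    obtain ⟨R, hR⟩ := exists_ramsey k (b * l + 1)
    refine ⟨R, fun V _ G hG hK hS a Y hY hind => ?_⟩
    obtain ⟨U, hU, hdom, p, hp⟩ := exists_minimal_dominating G
      (Finset.univ.filter (fun u => G.dist a u = i + 1)) Y (fun y hy => by
        obtain ⟨u, hu, huy⟩ := exists_adj_of_dist_eq_succ hG (hY y hy)
        exact ⟨u, by simpa using hu, huy⟩)
    have hUd : ∀ u ∈ U, G.dist a u = i + 1 := fun u hu => by simpa using hU hu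
    refine ⟨U, ?_, hUd, hdom⟩
    by_contra hlarge
    have hpp : ∀ u ∈ U, ∀ u' ∈ U, ¬ G.Adj (p u) (p u') := fun u hu u' hu' hadj =>
      hind (hp u hu).1 (hp u' hu').1 hadj.ne hadj
    have hup : ∀ u ∈ U, ∀ u' ∈ U, (G.Adj u (p u') ↔ u = u') := fun u hu u' hu' =>
      ⟨(hp u' hu').2.2 u hu, fun e => e ▸ (hp u hu).2.1⟩
    have hpd : ∀ u ∈ U, G.dist a (p u) = i + 1 + 1 := fun u hu => hY _ (hp u hu).1
    rcases hR V G U (by omega) with ⟨A, hA, hc, hcl⟩ | ⟨B, hB, hc, hi⟩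
    · obtain ⟨f, hf, hfA⟩ := exists_enum hc.ge
      refine not_isEmpty_iff.2 (Kstar_embeds f (p ∘ f) ?_ ?_ ?_ ?_) hK
      · exact fun i j hij => hcl (hfA i) (hfA j) (fun e => hij (hf e))
      · exact fun i j => hpp _ (hA (hfA i)) _ (hA (hfA j))
      · exact fun i j => (hup _ (hA (hfA i)) _ (hA (hfA j))).trans hf.eq_iff
      · intro i j e
        have h1 := hUd _ (hA (hfA i))
        have h2 := hpd _ (hA (hfA j))
        rw [e, Function.comp_apply] at h1
        omega
    · obtain ⟨T, hTc, hTd, hT⟩ := hb V G hG hK hS a B (fun y hy => hUd y (hB hy)) hi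
      choose! g hgT hg using hT
      have hlt : #T * l < #B := by
        have := Nat.mul_le_mul_right l hTc
        omega
      obtain ⟨x, hx, hxc⟩ := Finset.exists_lt_card_fiber_of_mul_lt_card_of_maps_to hgT hlt
      obtain ⟨f, hf, hfB⟩ := exists_enum hxc.le
      have hfB' : ∀ i, f i ∈ B := fun i => (Finset.mem_filter.1 (hfB i)).1
      have hfU : ∀ i, f i ∈ U := fun i => hB (hfB' i)
      have hxp : ∀ u ∈ U, ¬ G.Adj x (p u) := fun u hu hadj => by
        have h := hG.dist_triangle (u := a) (v := x) (w := p u)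
        rw [dist_eq_one_iff_adj.2 hadj, hpd u hu, hTd x hx] at h
        omega
      refine not_isEmpty_iff.2 (Sstar_embeds x f (p ∘ f) ?_ ?_ ?_ ?_ ?_ ?_) hS
      · intro i
        have := hg _ (hfB' i)
        rwa [(Finset.mem_filter.1 (hfB i)).2] at this
      · exact fun i => hxp _ (hfU i)
      · intro j e
        have h1 := hpd _ (hfU j)
        have h2 := hTd x hx
        rw [← e, Function.comp_apply] at h2
        omega
      · exact fun i j hadj => hi (hfB' i) (hfB' j) hadj.ne hadj
      · exact fun i j => hpp _ (hfU i) _ (hfU j)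
      · exact fun i j => (hup _ (hfU i) _ (hfU j)).trans hf.eq_iff

/-- Let `W` be an independent set of neighbors of `u` whose members have private neighbors outside
the closed neighborhood of `u`. Then `W` is bounded in size: a large clique among the private
neighbors spans, with the corresponding members of `W` as pendant vertices, an induced `K*_k`, and
a large independent set among them spans an induced `S*_l` centered at `u`. -/
lemma card_lt_of_private {k l R : ℕ}
    (hR : ∀ (V : Type) (G : SimpleGraph V) (S : Finset V), R ≤ #S →
      (∃ A ⊆ S, #A = k ∧ G.IsClique A) ∨ (∃ B ⊆ S, #B = l ∧ G.IsIndepSet B))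
    {V : Type} {G : SimpleGraph V} (hK : IsEmpty (Kstar k ↪g G)) (hS : IsEmpty (Sstar l ↪g G))
    (u : V) (W : Finset V) (hWu : ∀ w ∈ W, G.Adj u w) (hW : G.IsIndepSet W) (p : V → V)
    (hpu : ∀ w ∈ W, ¬ G.Adj u (p w) ∧ p w ≠ u)
    (hp : ∀ w ∈ W, G.Adj w (p w) ∧ ∀ w' ∈ W, G.Adj w' (p w) → w' = w) : #W < R := by
  by_contra hlarge
  have hww : ∀ w ∈ W, ∀ w' ∈ W, ¬ G.Adj w w' := fun w hw w' hw' hadj => hW hw hw' hadj.ne hadj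
  have hwp : ∀ w ∈ W, ∀ w' ∈ W, (G.Adj w (p w') ↔ w = w') := fun w hw w' hw' =>
    ⟨(hp w' hw').2 w hw, fun e => e ▸ (hp w hw).1⟩
  have hne : ∀ w ∈ W, ∀ w' ∈ W, p w ≠ w' := fun w hw w' hw' e => (hpu w hw).1 (e ▸ hWu w' hw')
  -- Ramsey's theorem is applied to the adjacency of the private neighbors, pulled back to `W`.
  rcases hR V (G.comap p) W (by omega) with ⟨A, hA, hc, hcl⟩ | ⟨B, hB, hc, hi⟩
  · obtain ⟨f, hf, hfA⟩ := exists_enum hc.ge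
    refine not_isEmpty_iff.2 (Kstar_embeds (p ∘ f) f ?_ ?_ ?_ ?_) hK
    · exact fun i j hij => hcl (hfA i) (hfA j) (fun e => hij (hf e))
    · exact fun i j => hww _ (hA (hfA i)) _ (hA (hfA j))
    · intro i j
      rw [G.adj_comm]
      exact (hwp _ (hA (hfA j)) _ (hA (hfA i))).trans (hf.eq_iff.trans eq_comm)
    · exact fun i j => hne _ (hA (hfA i)) _ (hA (hfA j))
  · obtain ⟨f, hf, hfB⟩ := exists_enum hc.ge
    refine not_isEmpty_iff.2 (Sstar_embeds u f (p ∘ f) ?_ ?_ ?_ ?_ ?_ ?_) hS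
    · exact fun i => hWu _ (hB (hfB i))
    · exact fun i => (hpu _ (hB (hfB i))).1
    · exact fun i => (hpu _ (hB (hfB i))).2
    · exact fun i j => hww _ (hB (hfB i)) _ (hB (hfB j))
    · intro i j
      by_cases hij : i = j
      · rw [hij]; exact G.loopless.irrefl _
      · exact fun hadj => hi (hfB i) (hfB j) (fun e => hij (hf e)) hadj
    · exact fun i j => (hwp _ (hB (hfB i)) _ (hB (hfB j))).trans hf.eq_iff

/-- Every distance layer is dominated by boundedly many vertices. Given a maximal independent
subset `Y` of the layer and a bounded set `U` below dominating `Y`, a vertex of the layer missed by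
`U` has a neighbor in `Y ∩ N(u)` for some `u ∈ U`; for each `u`, a minimal subset of `Y ∩ N(u)`
dominating these missed vertices is bounded. -/
lemma exists_bound_layer (k l i : ℕ) : ∃ b : ℕ, ∀ (V : Type) [Fintype V] (G : SimpleGraph V),
    G.Connected → IsEmpty (Kstar k ↪g G) → IsEmpty (Sstar l ↪g G) → ∀ a : V,
    ∃ D : Finset V, #D ≤ b ∧ ∀ x, G.dist a x = i → ∃ u ∈ D, u = x ∨ G.Adj u x := by
  classical
  obtain _ | i := i
  · refine ⟨1, fun V _ G hG _ _ a => ⟨{a}, by simp, fun x hx => ⟨a, by simp, Or.inl ?_⟩⟩⟩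
    exact hG.dist_eq_zero_iff.1 hx
  obtain ⟨b, hb⟩ := exists_bound_indep k l i
  obtain ⟨R, hR⟩ := exists_ramsey k l
  refine ⟨b + b * R, fun V _ G hG hK hS a => ?_⟩
  obtain ⟨Y, hYL, hY, hmax⟩ :=
    exists_maximal_indep G (Finset.univ.filter (fun v => G.dist a v = i + 1))
  obtain ⟨U, hUb, -, hU⟩ := hb V G hG hK hS a Y (fun y hy => by simpa using hYL hy) hY
  have hW : ∀ u, ∃ W : Finset V, #W ≤ R ∧ ∀ x, ¬ G.Adj u x → x ≠ u →
      (∃ y ∈ Y, G.Adj u y ∧ G.Adj y x) → ∃ w ∈ W, G.Adj w x := by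
    intro u
    obtain ⟨W, hWY, hdom, p, hp⟩ := exists_minimal_dominating G (Y.filter (fun y => G.Adj u y))
      (Finset.univ.filter (fun x => ¬ G.Adj u x ∧ x ≠ u ∧ ∃ y ∈ Y, G.Adj u y ∧ G.Adj y x))
      (fun x hx => by
        obtain ⟨-, -, -, y, hy, huy, hyx⟩ := Finset.mem_filter.1 hx
        exact ⟨y, Finset.mem_filter.2 ⟨hy, huy⟩, hyx⟩)
    refine ⟨W, ?_, fun x h1 h2 h3 => hdom x (Finset.mem_filter.2 ⟨Finset.mem_univ _, h1, h2, h3⟩)⟩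
    refine (card_lt_of_private hR hK hS u W (fun w hw => (Finset.mem_filter.1 (hWY hw)).2) ?_ p
      (fun w hw => ?_) (fun w hw => (hp w hw).2)).le
    · exact fun x hx y hy => hY (Finset.mem_filter.1 (hWY hx)).1 (Finset.mem_filter.1 (hWY hy)).1
    · obtain ⟨-, h1, h2, -⟩ := Finset.mem_filter.1 (hp w hw).1
      exact ⟨h1, h2⟩
  choose W hWR hWdom using hW
  refine ⟨U ∪ U.biUnion W, ?_, fun x hx => ?_⟩
  · have h1 : #(U.biUnion W) ≤ #U * R := Finset.card_biUnion_le_card_mul _ _ _ (fun u _ => hWR u)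
    have h2 := Nat.mul_le_mul_right R hUb
    have h3 := Finset.card_union_le U (U.biUnion W)
    omega
  · by_cases hxY : x ∈ Y
    · obtain ⟨u, hu, hux⟩ := hU x hxY
      exact ⟨u, Finset.mem_union_left _ hu, Or.inr hux⟩
    · obtain ⟨y, hy, hyx⟩ := hmax x (by simpa using hx) hxY
      obtain ⟨u, hu, huy⟩ := hU y hy
      by_cases h1 : G.Adj u x
      · exact ⟨u, Finset.mem_union_left _ hu, Or.inr h1⟩
      by_cases h2 : x = u
      · exact ⟨u, Finset.mem_union_left _ hu, Or.inl h2.symm⟩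
      obtain ⟨w, hw, hwx⟩ := hWdom u x h1 h2 ⟨y, hy, huy, hyx⟩
      exact ⟨w, Finset.mem_union_right _ (Finset.mem_biUnion.2 ⟨u, hu, hw⟩), Or.inr hwx⟩

/-- The domination number is bounded on connected graphs without induced `K*_k`, `S*_l`, `P_m`:
there are at most `m` distance layers, each dominated by boundedly many vertices. -/
lemma exists_bound_domNum (k l m : ℕ) : ∃ c : ℕ, ∀ (V : Type) [Fintype V] (G : SimpleGraph V),
    G.Connected → IsEmpty (Kstar k ↪g G) → IsEmpty (Sstar l ↪g G) →
    IsEmpty (pathGraph m ↪g G) → domNum G ≤ c := by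
  classical
  choose b hb using exists_bound_layer k l
  refine ⟨∑ i ∈ Finset.range m, b i, fun V _ G hG hK hS hP => ?_⟩
  obtain ⟨a⟩ := hG.nonempty
  choose D hDb hD using fun i => hb i V G hG hK hS a
  have hdom : Dominates G ((Finset.range m).biUnion D : Finset V) Set.univ := by
    intro x _
    obtain ⟨u, hu, hux⟩ := hD _ x rfl
    exact ⟨u, Finset.mem_coe.2 (Finset.mem_biUnion.2
      ⟨_, Finset.mem_range.2 (dist_lt_of_pathFree hG hP a x), hu⟩), hux⟩
  calc domNum G ≤ #((Finset.range m).biUnion D) :=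
        Nat.sInf_le ⟨_, Set.ncard_coe_finset _, hdom⟩
    _ ≤ ∑ i ∈ Finset.range m, #(D i) := Finset.card_biUnion_le
    _ ≤ ∑ i ∈ Finset.range m, b i := Finset.sum_le_sum fun i _ => hDb i

/-! ### The equivalence -/

/-- **Theorem 1.** For a set `𝓗` of connected finite graphs, the domination number of
connected `𝓗`-free graphs is bounded by a constant iff `𝓗 ≤ {K*_k, S*_ℓ, P_m}`
for some positive integers `k`, `ℓ`, `m`. -/
theorem domNum_bounded_iff (𝓗 : Set FinGraph) (hconn : ∀ H ∈ 𝓗, H.2.Connected) :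
    (∃ c : ℕ, ∀ (V : Type) [Fintype V], ∀ G : SimpleGraph V,
        G.Connected → HFree 𝓗 G → domNum G ≤ c) ↔
    ∃ k l m : ℕ, 0 < k ∧ 0 < l ∧ 0 < m ∧
      (∃ H ∈ 𝓗, Nonempty (H.2 ↪g Kstar k)) ∧
      (∃ H ∈ 𝓗, Nonempty (H.2 ↪g Sstar l)) ∧
      (∃ H ∈ 𝓗, Nonempty (H.2 ↪g pathGraph m)) := by
  constructor
  · rintro ⟨c, hc⟩
    -- a connected graph with domination number above `c` is not `𝓗`-free
    have key : ∀ (V : Type) [Fintype V] (G : SimpleGraph V), G.Connected → c < domNum G →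
        ∃ H ∈ 𝓗, Nonempty (H.2 ↪g G) := by
      intro V _ G hG hlt
      by_contra hcon
      push Not at hcon
      exact absurd (hc V G hG hcon) (not_le.2 hlt)
    exact ⟨c + 1, c + 1, 3 * c + 1, by omega, by omega, by omega,
      key _ _ (Kstar_connected (by omega)) (lt_domNum_Kstar c),
      key _ _ Sstar_connected (lt_domNum_Sstar c),
      key _ _ (pathGraph_connected _) (lt_domNum_pathGraph c)⟩
  · rintro ⟨k, l, m, -, -, -, ⟨H₁, h₁, ⟨e₁⟩⟩, ⟨H₂, h₂, ⟨e₂⟩⟩, ⟨H₃, h₃, ⟨e₃⟩⟩⟩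
    obtain ⟨c, hc⟩ := exists_bound_domNum k l m
    refine ⟨c, fun V _ G hG hfree => hc V G hG ?_ ?_ ?_⟩
    · exact ⟨fun f => (hfree H₁ h₁).false (f.comp e₁)⟩
    · exact ⟨fun f => (hfree H₂ h₂).false (f.comp e₂)⟩
    · exact ⟨fun f => (hfree H₃ h₃).false (f.comp e₃)⟩
end

section
/- Let k, ℓ and i be positive integers, let G be a {K*_k, S*_ℓ}-free graph, and let a be a vertex of G. Then for every independent set X ⊆ N^i_G(a), there exists a set U ⊆ N^{i−1}_G(a) with |U| ≤ g_{k,ℓ}(i) that dominates X (i.e., X ⊆ ∪_{u∈U} N[u]). -/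
/-!
The proof is by induction on the distance. At distance one, `{a}` dominates. For `X` at distance
`i + 2`, let `U` be an inclusion-minimal dominating set of `X` inside the sphere of radius `i + 1`.
By minimality every `u ∈ U` has a *private neighbour* in `X`: a vertex of `X` adjacent to `u` and to
no other element of `U`. Suppose that `U` has at least `R(k, (ℓ - 1) g(i + 1) + 1)` elements.

* If `U` contains a `k`-clique, this clique together with the private neighbours of its elements
  induces a `K*_k`, because `X` is independent.
* Otherwise `U` contains an independent set `W` of size `(ℓ - 1) g(i + 1) + 1`. By induction `W` is
  dominated by at most `g(i + 1)` vertices of the sphere of radius `i`, so by pigeonhole one of these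
  is adjacent to `ℓ` elements of `W`. Together with their private neighbours, which are too far from
  `a` to be adjacent to the centre, they induce an `S*_ℓ`.

The second case needs Ramsey numbers to be attained, hence the finite Ramsey theorem
`exists_ramsey_bound`.
-/


open SimpleGraph Finset

/-! ### Ramsey's theorem -/

/-- The finite Ramsey theorem for two colours. It is relative to a finite set `S` of vertices, so
that the induction can pass to neighbourhoods without changing the vertex type. -/
theorem exists_ramsey_bound (s t : ℕ) :
    ∃ N : ℕ, ∀ (α : Type) (G : SimpleGraph α) (S : Finset α), N ≤ S.card →
      (∃ A ⊆ S, G.IsNClique s A) ∨ (∃ B ⊆ S, Gᶜ.IsNClique t B) := by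
  classical
  induction s generalizing t with
  | zero => exact ⟨0, fun α G S _ => Or.inl ⟨∅, by simp, by simp⟩⟩
  | succ s ihs =>
    induction t with
    | zero => exact ⟨0, fun α G S _ => Or.inr ⟨∅, by simp, by simp⟩⟩
    | succ t iht =>
      obtain ⟨N₁, h₁⟩ := ihs (t + 1)
      obtain ⟨N₂, h₂⟩ := iht
      refine ⟨N₁ + N₂ + 1, fun α G S hS => ?_⟩
      obtain ⟨v, hv⟩ : S.Nonempty := Finset.card_pos.1 (by omega)
      have hsplit := Finset.card_filter_add_card_filter_not (s := S.erase v) (fun w => G.Adj v w)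
      rw [Finset.card_erase_of_mem hv] at hsplit
      have hsub : ∀ {p : α → Prop} [DecidablePred p], (S.erase v).filter p ⊆ S := by
        intro p _
        exact (Finset.filter_subset _ _).trans (Finset.erase_subset _ _)
      by_cases hc : N₁ ≤ ((S.erase v).filter fun w => G.Adj v w).card
      · rcases h₁ α G _ hc with ⟨A, hA, hA'⟩ | ⟨B, hB, hB'⟩
        · refine Or.inl ⟨insert v A, Finset.insert_subset hv (hA.trans hsub), hA'.insert ?_⟩
          intro b hb
          exact (Finset.mem_filter.1 (hA hb)).2
        · exact Or.inr ⟨B, hB.trans hsub, hB'⟩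
      · rcases h₂ α G ((S.erase v).filter fun w => ¬ G.Adj v w) (by omega) with
          ⟨A, hA, hA'⟩ | ⟨B, hB, hB'⟩
        · exact Or.inl ⟨A, hA.trans hsub, hA'⟩
        · refine Or.inr ⟨insert v B, Finset.insert_subset hv (hB.trans hsub), hB'.insert ?_⟩
          intro b hb
          obtain ⟨hb₁, hb₂⟩ := Finset.mem_filter.1 (hB hb)
          exact (SimpleGraph.compl_adj _ _ _).2 ⟨(Finset.ne_of_mem_erase hb₁).symm, hb₂⟩

theorem ramseyProp_ramsey (s t : ℕ) : RamseyProp (ramsey s t) s t := by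
  obtain ⟨N, hN⟩ := exists_ramsey_bound s t
  refine Nat.sInf_mem (s := {N | RamseyProp N s t}) ⟨N, fun G => ?_⟩
  rcases hN _ G Finset.univ (by simp) with ⟨A, -, hA⟩ | ⟨B, -, hB⟩
  · exact Or.inl ⟨A, hA⟩
  · exact Or.inr ⟨B, hB⟩

theorem exists_clique_or_indep_of_ramsey_le {V : Type} (G : SimpleGraph V) (U : Finset V)
    {s t : ℕ} (h : ramsey s t ≤ U.card) :
    (∃ A ⊆ U, G.IsNClique s A) ∨ (∃ B ⊆ U, Gᶜ.IsNClique t B) := by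
  obtain ⟨T, hTU, hT⟩ := Finset.exists_subset_card_eq h
  let e : Fin (ramsey s t) ↪ V :=
    (Finset.equivFinOfCardEq hT).symm.toEmbedding.trans (Function.Embedding.subtype _)
  have he : ∀ A : Finset (Fin (ramsey s t)), A.map e ⊆ U := by
    intro A v hv
    obtain ⟨j, -, rfl⟩ := Finset.mem_map.1 hv
    exact hTU ((Finset.equivFinOfCardEq hT).symm j).2
  rcases ramseyProp_ramsey s t (G.comap e) with ⟨A, hA⟩ | ⟨B, hB⟩
  · refine Or.inl ⟨A.map e, he A, ?_, by simp [hA.card_eq]⟩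
    intro x hx y hy hxy
    obtain ⟨i, hi, rfl⟩ := Finset.mem_map.1 (Finset.mem_coe.1 hx)
    obtain ⟨j, hj, rfl⟩ := Finset.mem_map.1 (Finset.mem_coe.1 hy)
    exact hA.isClique hi hj (fun hij => hxy (hij ▸ rfl))
  · refine Or.inr ⟨B.map e, he B, ?_, by simp [hB.card_eq]⟩
    intro x hx y hy hxy
    obtain ⟨i, hi, rfl⟩ := Finset.mem_map.1 (Finset.mem_coe.1 hx)
    obtain ⟨j, hj, rfl⟩ := Finset.mem_map.1 (Finset.mem_coe.1 hy)
    have := hB.isClique hi hj (fun hij => hxy (hij ▸ rfl))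
    exact (SimpleGraph.compl_adj _ _ _).2 ⟨hxy, fun h => ((SimpleGraph.compl_adj _ _ _).1 this).2 h⟩

/-! ### Spheres -/

theorem dist_le_succ_of_adj {V : Type} {G : SimpleGraph V} {a u v : V} (hu : G.Reachable a u)
    (h : G.Adj u v) : G.dist a v ≤ G.dist a u + 1 := by
  obtain ⟨p, hp⟩ := hu.exists_walk_length_eq_dist
  have := SimpleGraph.dist_le (p.concat h)
  rwa [SimpleGraph.Walk.length_concat, hp] at this

theorem exists_adj_of_mem_sphere_succ {V : Type} {G : SimpleGraph V} {a x : V} {i : ℕ}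
    (hx : x ∈ sphere G a (i + 1)) : ∃ u ∈ sphere G a i, G.Adj u x := by
  obtain ⟨hr, hd⟩ := hx
  obtain ⟨p, hp⟩ := hr.symm.exists_walk_length_eq_dist
  rw [SimpleGraph.dist_comm, hd] at hp
  cases p with
  | nil => simp at hp
  | cons h q =>
    rename_i u
    have hu : G.Reachable a u := q.reachable.symm
    have h₁ := SimpleGraph.dist_le q
    have h₂ := dist_le_succ_of_adj hu h.symm
    rw [SimpleGraph.dist_comm] at h₁
    rw [SimpleGraph.Walk.length_cons] at hp
    exact ⟨u, ⟨hu, by omega⟩, h.symm⟩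

theorem ne_of_mem_sphere {V : Type} {G : SimpleGraph V} {a u v : V} {i j : ℕ}
    (hu : u ∈ sphere G a i) (hv : v ∈ sphere G a j) (hij : i ≠ j) : u ≠ v := by
  rintro rfl
  exact hij (hu.2.symm.trans hv.2)

/-! ### Forbidden induced subgraphs -/

theorem nonempty_Kstar_embedding {V : Type} (G : SimpleGraph V) {n : ℕ} (u x : Fin n → V)
    (hne : ∀ i j, u i ≠ x j) (huu : ∀ i j, i ≠ j → G.Adj (u i) (u j))
    (hux : ∀ i j, G.Adj (u i) (x j) ↔ i = j) (hxx : ∀ i j, ¬ G.Adj (x i) (x j)) :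
    Nonempty (Kstar n ↪g G) := by
  have hxu : ∀ i j, G.Adj (x j) (u i) ↔ i = j := fun i j => by rw [G.adj_comm, hux]
  have hu : Function.Injective u := fun i j h => by
    rw [← hux i j, h, hux]
  have hx : Function.Injective x := fun i j h => by
    rw [← hux i j, ← h, hux]
  refine ⟨⟨⟨Sum.elim u x, hu.sumElim hx hne⟩, ?_⟩⟩
  rintro (i | i) (j | j)
  · by_cases hij : i = j
    · subst hij; simp
    · simp [Kstar, huu i j hij, hij]
  · simp [Kstar, hux]
  · simp [Kstar, hxu, eq_comm]
  · simp [Kstar, hxx]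

theorem nonempty_Sstar_embedding {V : Type} (G : SimpleGraph V) {n : ℕ} (c : V) (u x : Fin n → V)
    (hne : ∀ i j, u i ≠ x j) (hcx' : ∀ i, c ≠ x i)
    (hcu : ∀ i, G.Adj c (u i)) (hcx : ∀ i, ¬ G.Adj c (x i))
    (huu : ∀ i j, ¬ G.Adj (u i) (u j))
    (hux : ∀ i j, G.Adj (u i) (x j) ↔ i = j) (hxx : ∀ i j, ¬ G.Adj (x i) (x j)) :
    Nonempty (Sstar n ↪g G) := by
  have hxu : ∀ i j, G.Adj (x j) (u i) ↔ i = j := fun i j => by rw [G.adj_comm, hux]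
  have huc : ∀ i, G.Adj (u i) c := fun i => (hcu i).symm
  have hxc : ∀ i, ¬ G.Adj (x i) c := fun i h => hcx i h.symm
  have hu : Function.Injective u := fun i j h => by
    rw [← hux i j, h, hux]
  have hx : Function.Injective x := fun i j h => by
    rw [← hux i j, ← h, hux]
  have hinj : Function.Injective (fun o : Option (Fin n ⊕ Fin n) => o.elim c (Sum.elim u x)) := by
    have hs := hu.sumElim hx hne
    have hc : ∀ s, c ≠ Sum.elim u x s := by
      rintro (i | i)
      · exact (hcu i).ne
      · exact hcx' i
    rintro (_ | s) (_ | s') h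
    · rfl
    · exact absurd h (hc s')
    · exact absurd h.symm (hc s)
    · exact congrArg some (hs h)
  refine ⟨⟨⟨_, hinj⟩, ?_⟩⟩
  rintro (_ | i | i) (_ | j | j)
  · simp
  · simp [Sstar, hcu]
  · simp [Sstar, hcx]
  · simp [Sstar, huc]
  · simp [Sstar, huu]
  · simp [Sstar, hux]
  · simp [Sstar, hxc]
  · simp [Sstar, hxu, eq_comm]
  · simp [Sstar, hxx]

/-! ### Minimal dominating sets and the induction -/

/-- A minimal subset `U` of `S` dominating a set `X` disjoint from `S` gives every `u ∈ U` a private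
neighbour `x u` in `X`. -/
theorem exists_dominating_with_private {V : Type} [Fintype V] (G : SimpleGraph V) (S X : Set V)
    (hdisj : ∀ u ∈ S, ∀ y ∈ X, u ≠ y) (hdom : Dominates G S X) :
    ∃ U : Finset V, (∀ u ∈ U, u ∈ S) ∧ Dominates G (U : Set V) X ∧
      ∃ x : V → V, ∀ u ∈ U, x u ∈ X ∧ ∀ w ∈ U, G.Adj w (x u) ↔ w = u := by
  classical
  obtain ⟨U, ⟨hUS, hUX⟩, hmin⟩ := exists_minimal_of_wellFoundedLT
    (fun U : Finset V => (∀ u ∈ U, u ∈ S) ∧ Dominates G (U : Set V) X)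
    ⟨S.toFinset, by simp, by simpa using hdom⟩
  refine ⟨U, hUS, hUX, ?_⟩
  have hpriv : ∀ u ∈ U, ∃ y ∈ X, ∀ w ∈ U, G.Adj w y ↔ w = u := by
    intro u hu
    have hnot : ¬ Dominates G ((U.erase u : Finset V) : Set V) X := fun h =>
      Finset.notMem_erase u U
        (hmin ⟨fun w hw => hUS w (Finset.mem_of_mem_erase hw), h⟩ (Finset.erase_subset u U) hu)
    simp only [Dominates, not_forall] at hnot
    obtain ⟨y, hy, hnot⟩ := hnot
    have hother : ∀ w ∈ U, G.Adj w y → w = u := fun w hw hwy => by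
      by_contra hne
      exact hnot ⟨w, Finset.mem_coe.2 (Finset.mem_erase.2 ⟨hne, hw⟩), Or.inr hwy⟩
    refine ⟨y, hy, fun w hw => ⟨hother w hw, ?_⟩⟩
    rintro rfl
    obtain ⟨v, hv, hvy⟩ := hUX y hy
    have hvy := hvy.resolve_left (hdisj v (hUS v hv) y hy)
    exact hother v hv hvy ▸ hvy
  choose! x hx using hpriv
  exact ⟨x, hx⟩

/-- **Lemma 1.** In a `{K*_k, S*_ℓ}`-free graph, every independent set `X ⊆ N^i_G(a)`
is dominated by a set `U ⊆ N^{i-1}_G(a)` with `|U| ≤ g_{k,ℓ}(i)`. -/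
theorem exists_dominating_of_indep (k l i : ℕ) (hk : 0 < k) (hl : 0 < l) (hi : 0 < i)
    (V : Type) [Fintype V] (G : SimpleGraph V)
    (hK : IsEmpty (Kstar k ↪g G)) (hS : IsEmpty (Sstar l ↪g G))
    (a : V) (X : Set V) (hXsub : X ⊆ sphere G a i) (hXind : Indep G X) :
    ∃ U : Set V, U ⊆ sphere G a (i - 1) ∧ U.ncard ≤ gfun k l i ∧ Dominates G U X := by
  classical
  obtain ⟨i, rfl⟩ : ∃ j, i = j + 1 := ⟨i - 1, by omega⟩
  rw [Nat.add_sub_cancel]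
  induction i generalizing X with
  | zero =>
    refine ⟨{a}, ?_, by simp [gfun], fun y hy => ⟨a, rfl, Or.inr ?_⟩⟩
    · rintro _ rfl
      exact ⟨SimpleGraph.Reachable.refl _, SimpleGraph.dist_self⟩
    · exact SimpleGraph.dist_eq_one_iff_adj.1 (hXsub hy).2
  | succ i ih =>
    obtain ⟨U, hUS, hUX, x, hx⟩ := exists_dominating_with_private G (sphere G a (i + 1)) X
      (fun u hu y hy => ne_of_mem_sphere hu (hXsub hy) (by omega))
      (fun y hy =>
        let ⟨u, hu, huy⟩ := exists_adj_of_mem_sphere_succ (hXsub hy)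
        ⟨u, hu, Or.inr huy⟩)
    refine ⟨U, hUS, ?_, hUX⟩
    rw [Set.ncard_coe_finset]
    change U.card ≤ ramsey k ((l - 1) * gfun k l (i + 1) + 1) - 1
    by_contra! hcard
    have hXX : ∀ y ∈ X, ∀ z ∈ X, ¬ G.Adj y z := fun y hy z hz h => hXind y hy z hz h.ne h
    have hne : ∀ u ∈ U, ∀ w ∈ U, u ≠ x w := fun u hu w hw =>
      ne_of_mem_sphere (hUS u hu) (hXsub (hx w hw).1) (by omega)
    rcases exists_clique_or_indep_of_ramsey_le G U
      (s := k) (t := (l - 1) * gfun k l (i + 1) + 1) (by omega) with ⟨A, hAU, hA⟩ | ⟨W, hWU, hW⟩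
    · let e := (Finset.equivFinOfCardEq hA.card_eq).symm
      have heU : ∀ j, (e j : V) ∈ U := fun j => hAU (e j).2
      have he : ∀ {j j'}, (e j : V) = e j' ↔ j = j' := fun {j j'} => by
        rw [Subtype.coe_inj, e.injective.eq_iff]
      obtain ⟨f⟩ := nonempty_Kstar_embedding G (fun j => (e j : V)) (fun j => x (e j))
        (fun j j' => hne _ (heU j) _ (heU j'))
        (fun j j' hj => hA.isClique (e j).2 (e j').2 (fun h => hj (he.1 h)))
        (fun j j' => ((hx _ (heU j')).2 _ (heU j)).trans he)
        (fun j j' => hXX _ (hx _ (heU j)).1 _ (hx _ (heU j')).1)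
      exact hK.false f
    · have hWind : ∀ u ∈ W, ∀ v ∈ W, ¬ G.Adj u v := fun u hu v hv h =>
        ((SimpleGraph.compl_adj _ _ _).1 (hW.isClique hu hv h.ne)).2 h
      obtain ⟨U', hU'S, hU'card, hU'W⟩ := ih (W : Set V)
        (fun u hu v hv _ => hWind u hu v hv) (Nat.succ_pos i) (fun w hw => hUS w (hWU hw))
      have hadj : ∀ w ∈ W, ∃ c ∈ U', G.Adj c w := fun w hw => by
        obtain ⟨c, hc, hcw⟩ := hU'W w hw
        exact ⟨c, hc, hcw.resolve_left
          (ne_of_mem_sphere (hU'S hc) (hUS w (hWU hw)) (by omega))⟩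
      choose! φ hφ using hadj
      obtain ⟨c, hc, hfib⟩ := Finset.exists_lt_card_fiber_of_mul_lt_card_of_maps_to
        (s := W) (t := U'.toFinset) (f := φ) (n := l - 1)
        (fun w hw => Set.mem_toFinset.2 (hφ w hw).1) (by
          rw [hW.card_eq, ← Set.ncard_eq_toFinset_card', mul_comm]
          exact Nat.lt_succ_of_le (Nat.mul_le_mul_left _ hU'card))
      rw [Set.mem_toFinset] at hc
      obtain ⟨T, hT, hTcard⟩ := Finset.exists_subset_card_eq
        (show l ≤ (W.filter fun w => φ w = c).card by omega)
      let e := (Finset.equivFinOfCardEq hTcard).symm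
      have heW : ∀ j, (e j : V) ∈ W := fun j => (Finset.mem_filter.1 (hT (e j).2)).1
      have heU : ∀ j, (e j : V) ∈ U := fun j => hWU (heW j)
      have he : ∀ {j j'}, (e j : V) = e j' ↔ j = j' := fun {j j'} => by
        rw [Subtype.coe_inj, e.injective.eq_iff]
      have hcd := hU'S hc
      obtain ⟨f⟩ := nonempty_Sstar_embedding G c (fun j => (e j : V)) (fun j => x (e j))
        (fun j j' => hne _ (heU j) _ (heU j'))
        (fun j => ne_of_mem_sphere hcd (hXsub (hx _ (heU j)).1) (by omega))
        (fun j => by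
          have h := (hφ _ (heW j)).2
          rwa [(Finset.mem_filter.1 (hT (e j).2)).2] at h)
        (fun j h => by
          -- The centre has distance `i` from `a`, the private neighbours `i + 2`.
          have h₁ := dist_le_succ_of_adj hcd.1 h
          have h₂ := (hXsub (hx _ (heU j)).1).2
          have h₃ := hcd.2
          omega)
        (fun j j' => hWind _ (heW j) _ (heW j'))
        (fun j j' => ((hx _ (heU j')).2 _ (heU j)).trans he)
        (fun j j' => hXX _ (hx _ (heU j)).1 _ (hx _ (heU j')).1)
      exact hS.false f
end

section
/- Let k be a positive integer and let G be a K*_k-free graph. Let X be an independent set of vertices of G, and let U be a set of vertices disjoint from X such that for each u ∈ U there exists a vertex x_u ∈ X with N(x_u) ∩ U = {u} (a private neighbor of u in X). Then U contains no clique of size k. -/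
/-!
A clique `C ⊆ U` of size `k`, together with a private neighbor `x u ∈ X` for each `u ∈ C`, induces
a copy of `K*_k`: the vertices `x u` are pairwise nonadjacent because `X` is independent, they lie
outside `U`, and the only neighbor of `x u` in `C` is `u`. This last fact also makes `x` injective
on `C`.
-/

open SimpleGraph Finset

/-- In a `K*_k`-free graph, if `X` is independent, `U` is disjoint from `X`, and every
`u ∈ U` has a private neighbor `x_u ∈ X` (with `N(x_u) ∩ U = {u}`), then `U` contains
no clique of size `k`. -/
theorem no_clique_of_private_neighbors (k : ℕ) (hk : 0 < k)
    (V : Type) [Fintype V] (G : SimpleGraph V) (hK : IsEmpty (Kstar k ↪g G))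
    (X U : Set V) (hXind : Indep G X) (hdisj : Disjoint X U)
    (hpriv : ∀ u ∈ U, ∃ x ∈ X, G.neighborSet x ∩ U = {u}) :
    ¬ ∃ C : Set V, C ⊆ U ∧ G.IsClique C ∧ C.ncard = k := by
  rintro ⟨C, hCU, hC, hcard⟩
  choose! x hxX hxN using hpriv
  have hadj : ∀ u ∈ U, ∀ v ∈ U, (G.Adj (x u) v ↔ v = u) := fun u hu v hv => by
    have h := Set.ext_iff.mp (hxN u hu) v
    simpa [hv] using h
  have hne : ∀ u ∈ U, ∀ v ∈ U, x u ≠ v := fun u hu v hv h =>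
    Set.disjoint_left.mp hdisj (hxX u hu) (h ▸ hv)
  have hnadj : ∀ u ∈ U, ∀ v ∈ U, ¬ G.Adj (x u) (x v) := fun u hu v hv h =>
    hXind _ (hxX u hu) _ (hxX v hv) h.ne h
  have hxinj : ∀ u ∈ U, ∀ v ∈ U, x u = x v → u = v := fun u hu v hv h =>
    (hadj v hv u hu).mp (h ▸ (hadj u hu u hu).mpr rfl)
  let e : Fin k ≃ C := (Finite.equivFinOfCardEq hcard).symm
  let c : Fin k → V := fun i => e i
  have hcC : ∀ i, c i ∈ C := fun i => (e i).2
  have hcU : ∀ i, c i ∈ U := fun i => hCU (hcC i)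
  have hcinj : ∀ i j, c i = c j ↔ i = j := fun i j => by
    simp [c, Subtype.val_inj]
  have hcadj : ∀ i j, G.Adj (c i) (c j) ↔ i ≠ j := fun i j =>
    ⟨fun h hij => h.ne ((hcinj i j).mpr hij),
      fun h => hC (hcC i) (hcC j) fun h' => h ((hcinj i j).mp h')⟩
  refine hK.false ⟨⟨Sum.elim c (x ∘ c), ?_⟩, ?_⟩
  · rintro (i | i) (j | j) h
    · exact congrArg _ ((hcinj i j).mp h)
    · exact absurd h.symm (hne _ (hcU j) _ (hcU i))
    · exact absurd h (hne _ (hcU i) _ (hcU j))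
    · exact congrArg _ ((hcinj i j).mp (hxinj _ (hcU i) _ (hcU j) h))
  · rintro (i | i) (j | j)
    · change G.Adj (c i) (c j) ↔ _
      simp [Kstar, hcadj]
    · change G.Adj (c i) (x (c j)) ↔ _
      rw [G.adj_comm, hadj _ (hcU j) _ (hcU i), hcinj]
      simp [Kstar]
    · change G.Adj (x (c i)) (c j) ↔ _
      rw [hadj _ (hcU i) _ (hcU j), hcinj]
      simp [Kstar]
    · change G.Adj (x (c i)) (x (c j)) ↔ _
      simp [Kstar, hnadj _ (hcU i) _ (hcU j)]
end
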